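/- Let U = U[0]...U[m-1] be a string of length m ≥ 2 over a linearly ordered alphabet such that the end marker $ = U[m-1] is strictly smaller than every other symbol occurring in U and occurs only at position m-1. Let c be a symbol with c ≠ $, and let S = cU be the string of length m+1 obtained by prepending c to U. Let p be the unique index with BWT(U)[p] = $, and let r = |{ j : 1 ≤ j ≤ m, S_j <_lex S }| be the lexicographic rank of S among its own suffixes. Then BWT(S) is the string of length m+1 obtained from BWT(U) by replacing the symbol at position p with c and then inserting the symbol $ at position r (shifting the symbols at positions r, r+1, ... one place to the right). -/

import Mathlib

/-- The suffix `X[i..n-1]` of the string of length `n` represented by `X : ℕ → α`. -/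
def suffixAt {α : Type*} (X : ℕ → α) (n i : ℕ) : List α :=
  (List.range (n - i)).map (fun k => X (i + k))

/-- (Correctness of Steps 1–4 of the in-place BWT algorithm.)
Let `U` be a string of length `m ≥ 2` with end marker `$ = U[m-1]` (strictly smallest,
occurring only at the last position), let `c ≠ $` and `S = cU`. Let `p` be the unique
position of `$` in `BWT(U)` and `r` the lexicographic rank of `S` among its own
suffixes. Then `BWT(S)` is obtained from `BWT(U)` by writing `c` at position `p`
and then inserting `$` at position `r`. -/
theorem inplace_bwt_step {α : Type*} [LinearOrder α]
    (U : ℕ → α) (m : ℕ) (hm : 2 ≤ m)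
    (hend : ∀ k, k < m - 1 → U (m - 1) < U k)
    (c : α) (hc : c ≠ U (m - 1))
    (S : ℕ → α) (hS : ∀ k, S k = if k = 0 then c else U (k - 1))
    (saU : Equiv.Perm (Fin m))
    (hsaU : ∀ a b : Fin m, a < b →
      List.Lex (· < ·) (suffixAt U m (saU a)) (suffixAt U m (saU b)))
    (bwtU : Fin m → α)
    (hbwtU : ∀ i : Fin m,
      bwtU i = if (saU i : ℕ) = 0 then U (m - 1) else U ((saU i : ℕ) - 1))
    (saS : Equiv.Perm (Fin (m + 1)))
    (hsaS : ∀ a b : Fin (m + 1), a < b →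
      List.Lex (· < ·) (suffixAt S (m + 1) (saS a)) (suffixAt S (m + 1) (saS b)))
    (bwtS : Fin (m + 1) → α)
    (hbwtS : ∀ i : Fin (m + 1),
      bwtS i = if (saS i : ℕ) = 0 then S m else S ((saS i : ℕ) - 1))
    (p : Fin m) (hp : bwtU p = U (m - 1))
    (r : ℕ)
    (hr : r = Set.ncard {j : ℕ | 1 ≤ j ∧ j ≤ m ∧
      List.Lex (· < ·) (suffixAt S (m + 1) j) (suffixAt S (m + 1) 0)}) :
    List.ofFn bwtS = ((List.ofFn bwtU).set p c).insertIdx r (U (m - 1)) := by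
  have hsuf : ∀ j, suffixAt S (m + 1) (j + 1) = suffixAt U m j := by
    intro j
    unfold suffixAt
    rw [show m + 1 - (j + 1) = m - j by omega]
    apply List.map_congr_left
    intro k _
    rw [hS, if_neg (by omega)]
    congr 1
    omega
  have hasymm : ∀ a b : List α, List.Lex (· < ·) a b → ¬ List.Lex (· < ·) b a := by
    intro a b h1 h2
    have h1' : a < b := h1
    have h2' : b < a := h2
    exact lt_asymm h1' h2'
  have hrefl : ∀ a b : Fin (m + 1),
      List.Lex (· < ·) (suffixAt S (m + 1) (saS a)) (suffixAt S (m + 1) (saS b)) ↔ a < b := by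
    intro a b
    refine ⟨fun h => ?_, hsaS a b⟩
    by_contra hn
    rcases lt_or_eq_of_le (not_lt.mp hn) with h' | h'
    · exact hasymm _ _ h (hsaS b a h')
    · subst h'
      exact hasymm _ _ h h
  obtain ⟨z, hz⟩ : ∃ z, saS z = 0 := ⟨saS.symm 0, by simp⟩
  let e : Fin m → Fin (m + 1) := fun i => saS.symm (saU i).succ
  have he : ∀ i, saS (e i) = (saU i).succ := fun i => by simp [e]
  have hmono : StrictMono e := by
    intro a b hab
    rw [← hrefl, he, he, Fin.val_succ, Fin.val_succ, hsuf, hsuf]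
    exact hsaU a b hab
  have hrange : Set.range e = Set.range z.succAbove := by
    rw [Fin.range_succAbove]
    ext x
    simp only [Set.mem_range, Set.mem_compl_iff, Set.mem_singleton_iff]
    constructor
    · rintro ⟨i, rfl⟩ h
      have := he i
      rw [h, hz] at this
      exact Fin.succ_ne_zero _ this.symm
    · intro hx
      have hx0 : saS x ≠ 0 := fun h => hx (saS.injective (h.trans hz.symm))
      obtain ⟨y, hy⟩ := Fin.exists_succ_eq.mpr hx0
      refine ⟨saU.symm y, saS.injective ?_⟩
      rw [he, Equiv.apply_symm_apply, hy]
  have heq : e = z.succAbove :=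
    (StrictMono.range_inj hmono (Fin.strictMono_succAbove z)).mp hrange
  have hp0 : (saU p : ℕ) = 0 := by
    by_contra h
    rw [hbwtU, if_neg h] at hp
    have h2 := hend ((saU p : ℕ) - 1) (by have := (saU p).isLt; omega)
    rw [hp] at h2
    exact lt_irrefl _ h2
  have hrz : r = z := by
    have hset : {j : ℕ | 1 ≤ j ∧ j ≤ m ∧
      List.Lex (· < ·) (suffixAt S (m + 1) j) (suffixAt S (m + 1) 0)}
        = (fun k : Fin (m + 1) => (saS k : ℕ)) '' (Finset.Iio z : Finset (Fin (m + 1))) := by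
      ext j
      simp only [Set.mem_ofPred_eq, Set.mem_image, Finset.coe_Iio, Set.mem_Iio]
      have h0 : ∀ k, k < z ↔
          List.Lex (· < ·) (suffixAt S (m + 1) (saS k)) (suffixAt S (m + 1) 0) := by
        intro k
        rw [← hrefl, hz, Fin.val_zero]
      constructor
      · rintro ⟨_, h2, h3⟩
        refine ⟨saS.symm ⟨j, by omega⟩, ?_, by simp⟩
        rw [h0]
        simpa using h3
      · rintro ⟨k, hk, rfl⟩
        refine ⟨?_, by have := (saS k).isLt; omega, (h0 k).mp hk⟩
        have : saS k ≠ 0 := fun h => hk.ne (saS.injective (h.trans hz.symm))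
        have : (saS k : ℕ) ≠ 0 := fun h => this (Fin.ext h)
        omega
    have hinj : Function.Injective (fun k : Fin (m + 1) => (saS k : ℕ)) :=
      Fin.val_injective.comp saS.injective
    rw [hr, hset, Set.ncard_image_of_injective _ hinj,
      Set.ncard_coe_finset, Fin.card_Iio]
  have hbz : bwtS z = U (m - 1) := by
    rw [hbwtS, hz, if_pos (by simp), hS, if_neg (by omega)]
  have hba : ∀ i, bwtS (z.succAbove i) = if i = p then c else bwtU i := by
    intro i
    rw [← heq, hbwtS, he, Fin.val_succ, if_neg (by omega), Nat.add_sub_cancel, hS]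
    by_cases hi : i = p
    · subst hi
      rw [if_pos hp0, if_pos rfl]
    · have : (saU i : ℕ) ≠ 0 := fun h =>
        hi (saU.injective (Fin.ext (h.trans hp0.symm)))
      rw [if_neg this, if_neg hi, hbwtU, if_neg this]
  have hzl := z.isLt
  subst hrz
  apply List.ext_getElem
  · rw [List.length_insertIdx]
    simp
    omega
  · intro n h1 h2
    have hn : n < m + 1 := by simpa using h1
    rw [List.getElem_ofFn, List.getElem_insertIdx]
    split_ifs with h3 h4
    · have := hba ⟨n, by omega⟩
      rw [Fin.succAbove_of_castSucc_lt _ _ (by simpa [Fin.lt_def] using h3)] at this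
      rw [List.getElem_set, List.getElem_ofFn]
      simp only [Fin.ext_iff, eq_comm] at this ⊢
      exact this.symm
    · rw [← hbz]
      congr 1
      exact Fin.ext h4
    · have := hba ⟨n - 1, by omega⟩
      rw [Fin.succAbove_of_le_castSucc _ _ (by simp [Fin.le_def]; omega)] at this
      have hs : (⟨n - 1, by omega⟩ : Fin m).succ = ⟨n, hn⟩ := Fin.ext (by simp; omega)
      rw [hs] at this
      rw [List.getElem_set, List.getElem_ofFn]
      simp only [Fin.ext_iff, eq_comm] at this ⊢
      exact this
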